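/- Let ℐ be a finite nonempty index set. For each t ∈ ℕ and i ∈ ℐ let M_i(t) be a nonempty subset of 𝒩, and set Δ_i(t) = max_{k∈M_i(t)} x_k(t) − min_{k∈M_i(t)} x_k(t). For each k ∈ 𝒩, j ∈ ℐ and t ∈ ℕ let M_{k,j}(t) ⊆ M_j(t) be sets with M_{k,j}(t) ∩ M_{k,j'}(t) = ∅ whenever j ≠ j'. Let numbers c_{i,j}(t) ≥ 0 satisfy c_{i,j}(t) ≤ Σ_{l∈M_{k,j}(t)} γ_{k,l}(t) for every k ∈ M_i(t+1), and put C(t) = (c_{i,j}(t))_{i,j∈ℐ}. Then for every solution x of the consensus system, all t, T ∈ ℕ and every i ∈ ℐ, writing P = C(t+T−1)·C(t+T−2)···C(t) (with P the identity matrix when T = 0), one has 0 ≤ Δ_i(t+T) ≤ Σ_{j∈ℐ} P_{i,j}·Δ_j(t) + (1 − Σ_{j∈ℐ} P_{i,j})·Δ(t). -/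

import Mathlib

/-- The diameter of a finite family of reals: max minus min. -/
noncomputable def diam {N : Type*} [Fintype N] [Nonempty N] (y : N → ℝ) : ℝ :=
  Finset.univ.sup' Finset.univ_nonempty y - Finset.univ.inf' Finset.univ_nonempty y

/-- The diameter of `y` restricted to a finite subset `s` (zero if `s` is empty). -/
noncomputable def diamOn {N : Type*} (s : Finset N) (y : N → ℝ) : ℝ :=
  if h : s.Nonempty then s.sup' h y - s.inf' h y else 0

/-- The ordered (time-decreasing) product of `d` matrices starting at time `s`:
`C(s+d-1) ⬝ C(s+d-2) ⬝ ⋯ ⬝ C(s)` (the identity when `d = 0`). -/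
noncomputable def prodRevFrom {I : Type*} [Fintype I] [DecidableEq I]
    (C : ℕ → Matrix I I ℝ) (s : ℕ) : ℕ → Matrix I I ℝ
  | 0 => 1
  | d + 1 => C (s + d) * prodRevFrom C s d

/-!
Let `[m, S]` contain the state at time `t`; since every new value is a weighted mean of old ones, it
contains all later states too. Consider the deficits `e_i = (S - m) - Δ_i`. An agent of `M_i(t+1)`
puts mass at least `c_{i,j}` on agents of `M_j(t)`, for different `j` on disjoint sets of agents.
Hence its new value lies below `S` by at least `∑ c_{i,j} (S - max_{M_j} x)` and above `m` by at
least `∑ c_{i,j} (min_{M_j} x - m)`. Adding the two gives `C(t) e(t) ≤ e(t+1)`, which unlike the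
affine inequality for `Δ` iterates by mere multiplication with nonnegative matrices.
-/

section WeightedMean

variable {R ι κ : Type*} [Ring R] [Fintype ι] [Fintype κ]

lemma dotProduct_const_sub (w y : ι → R) (a : R) :
    w ⬝ᵥ (fun i => a - y i) = (∑ i, w i) * a - w ⬝ᵥ y := by
  simp only [dotProduct, mul_sub, Finset.sum_sub_distrib, Finset.sum_mul]

variable [PartialOrder R] [IsOrderedRing R]

lemma dotProduct_const_sub_le_const_sub_iff (w y : ι → R) (a b : R) :
    w ⬝ᵥ (fun i => a - y i) ≤ a - b ↔ b ≤ w ⬝ᵥ y + (1 - ∑ i, w i) * a := by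
  rw [dotProduct_const_sub, le_sub_comm]
  congr! 1
  noncomm_ring

lemma dotProduct_le_dotProduct_of_pairwise_disjoint {w g : ι → R} (hw : ∀ i, 0 ≤ w i)
    (hg : ∀ i, 0 ≤ g i) {A : κ → Finset ι} (hA : Pairwise fun j j' => Disjoint (A j) (A j'))
    {c r : κ → R} (hc : ∀ j, c j ≤ ∑ i ∈ A j, w i) (hr : ∀ j, 0 ≤ r j)
    (hrg : ∀ j, ∀ i ∈ A j, r j ≤ g i) :
    c ⬝ᵥ r ≤ w ⬝ᵥ g := by
  classical
  have block_le (j : κ) : c j * r j ≤ ∑ i ∈ A j, w i * g i :=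
    calc c j * r j ≤ (∑ i ∈ A j, w i) * r j := mul_le_mul_of_nonneg_right (hc j) (hr j)
      _ = ∑ i ∈ A j, w i * r j := Finset.sum_mul ..
      _ ≤ ∑ i ∈ A j, w i * g i :=
        Finset.sum_le_sum fun i hi => mul_le_mul_of_nonneg_left (hrg j i hi) (hw i)
  calc ∑ j, c j * r j ≤ ∑ j, ∑ i ∈ A j, w i * g i := Finset.sum_le_sum fun j _ => block_le j
    _ = ∑ i ∈ Finset.univ.biUnion A, w i * g i :=
      (Finset.sum_biUnion fun _ _ _ _ hne => hA hne).symm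
    _ ≤ ∑ i, w i * g i :=
      Finset.sum_le_sum_of_subset_of_nonneg (Finset.subset_univ _)
        fun i _ _ => mul_nonneg (hw i) (hg i)

lemma dotProduct_mem_Icc_of_pairwise_disjoint {w : ι → R} (hw : w ∈ stdSimplex R ι)
    {A : κ → Finset ι} (hA : Pairwise fun j j' => Disjoint (A j) (A j')) {c : κ → R}
    (hc : ∀ j, c j ≤ ∑ i ∈ A j, w i) {y : ι → R} {m S : R} (hy : ∀ i, y i ∈ Set.Icc m S)
    {a b : κ → R} (ha : ∀ j, m ≤ a j) (hb : ∀ j, b j ≤ S)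
    (hab : ∀ j, ∀ i ∈ A j, y i ∈ Set.Icc (a j) (b j)) :
    w ⬝ᵥ y ∈ Set.Icc (m + c ⬝ᵥ fun j => a j - m) (S - c ⬝ᵥ fun j => S - b j) := by
  have lower : (c ⬝ᵥ fun j => a j - m) ≤ w ⬝ᵥ fun i => y i - m :=
    dotProduct_le_dotProduct_of_pairwise_disjoint hw.1 (fun i => sub_nonneg.2 (hy i).1) hA hc
      (fun j => sub_nonneg.2 (ha j)) fun j i hi => sub_le_sub_right (hab j i hi).1 m
  have upper : (c ⬝ᵥ fun j => S - b j) ≤ w ⬝ᵥ fun i => S - y i :=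
    dotProduct_le_dotProduct_of_pairwise_disjoint hw.1 (fun i => sub_nonneg.2 (hy i).2) hA hc
      (fun j => sub_nonneg.2 (hb j)) fun j i hi => sub_le_sub_left (hab j i hi).2 S
  have mean_sub : (w ⬝ᵥ fun i => y i - m) = w ⬝ᵥ y - m := by
    simp only [dotProduct, mul_sub, Finset.sum_sub_distrib, ← Finset.sum_mul, hw.2, one_mul]
  rw [mean_sub] at lower
  rw [dotProduct_const_sub w, hw.2, one_mul] at upper
  exact ⟨le_sub_iff_add_le'.1 lower, le_sub_comm.1 upper⟩

end WeightedMean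

section Diameter

variable {ι : Type*} {s : Finset ι}

lemma mem_Icc_inf'_sup' {α : Type*} [Lattice α] (hs : s.Nonempty) (y : ι → α) {i : ι}
    (hi : i ∈ s) : y i ∈ Set.Icc (s.inf' hs y) (s.sup' hs y) :=
  ⟨s.inf'_le y hi, s.le_sup' y hi⟩

lemma diamOn_of_nonempty (hs : s.Nonempty) (y : ι → ℝ) :
    diamOn s y = s.sup' hs y - s.inf' hs y :=
  dif_pos hs

lemma diamOn_nonneg (s : Finset ι) (y : ι → ℝ) : 0 ≤ diamOn s y := by
  obtain rfl | hs := s.eq_empty_or_nonempty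
  · simp [diamOn]
  · rw [diamOn_of_nonempty hs, sub_nonneg]
    obtain ⟨i, hi⟩ := hs
    exact (s.inf'_le y hi).trans (s.le_sup' y hi)

lemma diamOn_le_sub (hs : s.Nonempty) {y : ι → ℝ} {a b : ℝ}
    (hy : ∀ i ∈ s, y i ∈ Set.Icc a b) : diamOn s y ≤ b - a := by
  rw [diamOn_of_nonempty hs]
  exact sub_le_sub (Finset.sup'_le hs y fun i hi => (hy i hi).2)
    (Finset.le_inf' hs y fun i hi => (hy i hi).1)

lemma dotProduct_sub_diamOn_le_sub_diamOn_mulVec {ι' κ : Type*} [Fintype ι] [Fintype κ]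
    {G : Matrix ι' ι ℝ} (hG : ∀ k, G k ∈ stdSimplex ℝ ι) {s : Finset ι'} (hs : s.Nonempty)
    {B : κ → Finset ι} (hB : ∀ j, (B j).Nonempty)
    {A : ι' → κ → Finset ι} (hAB : ∀ k j, A k j ⊆ B j)
    (hA : ∀ k, Pairwise fun j j' => Disjoint (A k j) (A k j'))
    {c : κ → ℝ} (hc : ∀ j, ∀ k ∈ s, c j ≤ ∑ i ∈ A k j, G k i)
    {y : ι → ℝ} {m S : ℝ} (hy : ∀ i, y i ∈ Set.Icc m S) :
    (c ⬝ᵥ fun j => (S - m) - diamOn (B j) y) ≤ (S - m) - diamOn s (G.mulVec y) := by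
  let a j := (B j).inf' (hB j) y
  let b j := (B j).sup' (hB j) y
  have mulVec_mem (k : ι') (hk : k ∈ s) : G.mulVec y k ∈
      Set.Icc (m + c ⬝ᵥ fun j => a j - m) (S - c ⬝ᵥ fun j => S - b j) :=
    dotProduct_mem_Icc_of_pairwise_disjoint (hG k) (hA k) (fun j => hc j k hk) hy
      (fun j => Finset.le_inf' (hB j) y fun i _ => (hy i).1)
      (fun j => Finset.sup'_le (hB j) y fun i _ => (hy i).2)
      fun j _ hi => mem_Icc_inf'_sup' (hB j) y (hAB k j hi)
  have deficit_split : (fun j => (S - m) - diamOn (B j) y) =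
      (fun j => S - b j) + fun j => a j - m := by
    funext j
    rw [diamOn_of_nonempty (hB j), Pi.add_apply]
    ring
  rw [deficit_split, dotProduct_add]
  linarith [diamOn_le_sub hs mulVec_mem]

end Diameter

section Iteration

variable {ι : Type*} [Fintype ι]

lemma consensus_mem_of_convex {𝕜 : Type*} [Field 𝕜] [LinearOrder 𝕜] [IsStrictOrderedRing 𝕜]
    {Γ : ℕ → Matrix ι ι 𝕜} (hΓ : ∀ t k, Γ t k ∈ stdSimplex 𝕜 ι)
    {x : ℕ → ι → 𝕜} (hx : ∀ t, x (t + 1) = (Γ t).mulVec (x t)) {s : Set 𝕜} (hs : Convex 𝕜 s)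
    {t : ℕ} (ht : ∀ k, x t k ∈ s) (T : ℕ) (k : ι) : x (t + T) k ∈ s := by
  induction T generalizing k with
  | zero => exact ht k
  | succ T ih =>
    rw [← add_assoc, hx]
    exact hs.sum_mem (fun l _ => (hΓ _ k).1 l) (hΓ _ k).2 fun l _ => ih l

lemma prodRevFrom_mulVec_le [DecidableEq ι] {C : ℕ → Matrix ι ι ℝ} (hC : ∀ t i j, 0 ≤ C t i j)
    {t : ℕ} {e : ℕ → ι → ℝ} (he : ∀ T, (C (t + T)).mulVec (e T) ≤ e (T + 1)) (T : ℕ) :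
    (prodRevFrom C t T).mulVec (e 0) ≤ e T := by
  induction T with
  | zero => exact (Matrix.one_mulVec (e 0)).le
  | succ T ih =>
    calc (prodRevFrom C t (T + 1)).mulVec (e 0)
        = (C (t + T)).mulVec ((prodRevFrom C t T).mulVec (e 0)) :=
          (Matrix.mulVec_mulVec ..).symm
      _ ≤ (C (t + T)).mulVec (e T) := fun i => dotProduct_le_dotProduct_of_nonneg_left ih (hC _ i)
      _ ≤ e (T + 1) := he T

end Iteration

/-- Lemma A.1 (fundamental inequalities): with `P = C(t+T-1)⋯C(t)`, for every `i`,
`0 ≤ Δ_i(t+T) ≤ Σ_j P_{i,j} Δ_j(t) + (1 - Σ_j P_{i,j}) Δ(t)`. -/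
theorem fundamental_diameter_inequalities
    {N I : Type*} [Fintype N] [Nonempty N] [Fintype I] [Nonempty I] [DecidableEq I]
    (Γ : ℕ → Matrix N N ℝ)
    (hnn : ∀ t k l, 0 ≤ Γ t k l)
    (hrow : ∀ t k, ∑ l, Γ t k l = 1)
    (M : I → ℕ → Finset N)
    (hMne : ∀ i t, (M i t).Nonempty)
    (Mk : N → I → ℕ → Finset N)
    (hMk : ∀ k j t, Mk k j t ⊆ M j t)
    (hdisj : ∀ k (j j' : I) t, j ≠ j' → Disjoint (Mk k j t) (Mk k j' t))
    (c : I → I → ℕ → ℝ)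
    (hc0 : ∀ i j t, 0 ≤ c i j t)
    (hc : ∀ i j t, ∀ k ∈ M i (t + 1), c i j t ≤ ∑ l ∈ Mk k j t, Γ t k l)
    (x : ℕ → N → ℝ)
    (hx : ∀ t, x (t + 1) = (Γ t).mulVec (x t)) :
    ∀ t T : ℕ, ∀ i : I,
      0 ≤ diamOn (M i (t + T)) (x (t + T)) ∧
      diamOn (M i (t + T)) (x (t + T)) ≤
        (∑ j, prodRevFrom (fun u => Matrix.of fun a b => c a b u) t T i j
            * diamOn (M j t) (x t))
        + (1 - ∑ j, prodRevFrom (fun u => Matrix.of fun a b => c a b u) t T i j)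
            * diam (x t) := by
  intro t T i
  refine ⟨diamOn_nonneg _ _, ?_⟩
  let m := Finset.univ.inf' Finset.univ_nonempty (x t)
  let S := Finset.univ.sup' Finset.univ_nonempty (x t)
  let deficit (u : ℕ) (j : I) : ℝ := (S - m) - diamOn (M j (t + u)) (x (t + u))
  have hΓ (u : ℕ) (k : N) : Γ u k ∈ stdSimplex ℝ N := ⟨hnn u k, hrow u k⟩
  have mem_Icc (u : ℕ) (k : N) : x (t + u) k ∈ Set.Icc m S :=
    consensus_mem_of_convex hΓ hx (convex_Icc m S)
      (fun l => mem_Icc_inf'_sup' Finset.univ_nonempty (x t) (Finset.mem_univ l)) u k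
  have deficit_step (u : ℕ) :
      (Matrix.of fun a b => c a b (t + u)).mulVec (deficit u) ≤ deficit (u + 1) := fun a => by
    simp only [deficit, ← add_assoc, hx (t + u)]
    exact dotProduct_sub_diamOn_le_sub_diamOn_mulVec (hΓ _) (hMne a _) (fun j => hMne j _)
      (fun k j => hMk k j _) (fun k j j' => hdisj k j j' _) (fun j => hc a j _) (mem_Icc u)
  exact (dotProduct_const_sub_le_const_sub_iff _ _ (S - m) _).1
    (prodRevFrom_mulVec_le (fun u a b => hc0 a b u) deficit_step T i)
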